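/- Let n ≥ 1, C ≥ 1, let K be a symmetric positive semidefinite real n×n matrix, λ > 0, Y ∈ ℝ^{n×C}, and A = K(K + λI_n)⁻¹. Fix an index i with A_{ii} ≠ 1, and let f^{-i}(x_i) ∈ ℝ^C be the leave-one-out prediction with components (k^{(i)})ᵀ(K^{(i)} + λI_{n-1})⁻¹Y^{(i)}_{•k}. Define the modified target matrix Ỹ ∈ ℝ^{n×C} by Ỹ_{jk} = Y_{jk} for j ≠ i and Ỹ_{ik} = f^{-i}_k(x_i). Then the full-data ridge prediction on the modified targets reproduces the leave-one-out prediction at row i: (A Ỹ)_{ik} = Ỹ_{ik} for all k ∈ {1,…,C}. -/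

import Mathlib

open Matrix Finset

/-!
Extend the coefficients `(K⁽ⁱ⁾ + lam I)⁻¹ Y⁽ⁱ⁾` of the leave-one-out model by a zero row at `i` to
a matrix `X`. Then `(K + lam I) X = Ỹ`: on the rows `j ≠ i` this is the leave-one-out system, and on
row `i` the regularization term vanishes, which leaves the leave-one-out prediction. Hence
`A Ỹ = K X`, whose `i`-th row is that same prediction.
-/

section RidgeRegression

theorem isUnit_add_smul_one_of_posSemidef {ι 𝕜 : Type*} [Fintype ι] [DecidableEq ι]
    [Field 𝕜] [PartialOrder 𝕜] [StarRing 𝕜] [StarOrderedRing 𝕜]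
    {K : Matrix ι ι 𝕜} (hK : K.PosSemidef) {lam : 𝕜} (hlam : 0 < lam) :
    IsUnit (K + lam • (1 : Matrix ι ι 𝕜)) :=
  (PosDef.posSemidef_add hK (PosDef.one.smul hlam)).isUnit

variable {ι κ R : Type*} [Fintype ι] [DecidableEq ι] [CommRing R]

/-- The matrix `A = K (K + lam I)⁻¹` that sends targets to in-sample ridge predictions. -/
noncomputable def ridgeSmoother (K : Matrix ι ι R) (lam : R) : Matrix ι ι R :=
  K * (K + lam • (1 : Matrix ι ι R))⁻¹

/-- The regularized kernel matrix `K⁽ⁱ⁾ + lam I` of the data without the point `i`. The remaining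
points are indexed by the subtype `{j // j ≠ i}`. -/
def looGram (K : Matrix ι ι R) (lam : R) (i : ι) : Matrix {j // j ≠ i} {j // j ≠ i} R :=
  K.submatrix Subtype.val Subtype.val + lam • 1

/-- The coefficients `(K⁽ⁱ⁾ + lam I)⁻¹ Y⁽ⁱ⁾` of the ridge predictor trained without the point `i`,
one column per output. -/
noncomputable def looCoeff (K : Matrix ι ι R) (lam : R) (i : ι) (Y : Matrix ι κ R) :
    Matrix {j // j ≠ i} κ R :=
  (looGram K lam i)⁻¹ * Y.submatrix (Subtype.val : {j // j ≠ i} → ι) id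

/-- The value at the point `i`, one entry per output, of the ridge predictor trained without `i`. -/
noncomputable def looPrediction (K : Matrix ι ι R) (lam : R) (i : ι) (Y : Matrix ι κ R) : κ → R :=
  (fun a : {j // j ≠ i} => K i a) ᵥ* looCoeff K lam i Y

theorem looPrediction_apply (K : Matrix ι ι R) (lam : R) (i : ι) (Y : Matrix ι κ R) (k : κ) :
    looPrediction K lam i Y k = ∑ a : {j // j ≠ i}, ∑ b : {j // j ≠ i},
      K i a * (looGram K lam i)⁻¹ a b * Y b k := by
  simp only [looPrediction, looCoeff, vecMul, dotProduct, mul_apply, submatrix_apply, id_eq,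
    mul_sum, mul_assoc]

theorem ridgeSmoother_mul_add_smul_one_mul {K : Matrix ι ι R} {lam : R}
    (hK : IsUnit (K + lam • (1 : Matrix ι ι R))) (X : Matrix ι κ R) :
    ridgeSmoother K lam * ((K + lam • (1 : Matrix ι ι R)) * X) = K * X := by
  rw [ridgeSmoother, Matrix.mul_assoc,
    nonsing_inv_mul_cancel_left _ _ ((isUnit_iff_isUnit_det _).1 hK)]

theorem submatrix_add_smul_one_mul_looCoeff {K : Matrix ι ι R} {lam : R} {i : ι}
    (hKi : IsUnit (looGram K lam i)) (Y : Matrix ι κ R) :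
    (K + lam • (1 : Matrix ι ι R)).submatrix id (Subtype.val : {j // j ≠ i} → ι) *
        looCoeff K lam i Y =
      Y.updateRow i (looPrediction K lam i Y) := by
  ext j k
  rw [mul_apply_eq_vecMul]
  obtain rfl | hji := eq_or_ne j i
  · have row_eq : (K + lam • (1 : Matrix ι ι R)).submatrix id Subtype.val j =
        fun a : {l // l ≠ j} => K j a := by
      ext a
      simp [one_apply_ne a.2.symm]
    rw [row_eq, updateRow_self, looPrediction]
  · have row_eq : (K + lam • (1 : Matrix ι ι R)).submatrix id Subtype.val j =
        looGram K lam i ⟨j, hji⟩ := by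
      ext a
      simp [looGram, one_apply, Subtype.ext_iff]
    rw [row_eq, updateRow_ne hji, ← mul_apply_eq_vecMul, looCoeff,
      mul_nonsing_inv_cancel_left _ _ ((isUnit_iff_isUnit_det _).1 hKi)]
    rfl

theorem loo_fixed_point_general {K : Matrix ι ι R} {lam : R} {i : ι}
    (hK : IsUnit (K + lam • (1 : Matrix ι ι R)))
    (hKi : IsUnit (looGram K lam i)) (Y : Matrix ι κ R) :
    (ridgeSmoother K lam * Y.updateRow i (looPrediction K lam i Y)) i =
      looPrediction K lam i Y := by
  -- Left multiplication by `extendByZero` inserts a zero row at `i`.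
  let extendByZero : Matrix ι {j // j ≠ i} R := (1 : Matrix ι ι R).submatrix id Subtype.val
  have mul_extendByZero (M : Matrix ι ι R) : M * extendByZero = M.submatrix id Subtype.val :=
    mul_submatrix_one (Equiv.refl ι) Subtype.val M
  have system : (K + lam • (1 : Matrix ι ι R)) * (extendByZero * looCoeff K lam i Y) =
      Y.updateRow i (looPrediction K lam i Y) := by
    rw [← Matrix.mul_assoc, mul_extendByZero, submatrix_add_smul_one_mul_looCoeff hKi]
  rw [← system, ridgeSmoother_mul_add_smul_one_mul hK, ← Matrix.mul_assoc, mul_extendByZero,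
    mul_apply_eq_vecMul]
  rfl

end RidgeRegression

/-- **Fixed-point property of the leave-one-out model.**
If the left-out target at row `i` is replaced by the leave-one-out prediction
`f k = (k⁽ⁱ⁾)ᵀ (K⁽ⁱ⁾ + lam I)⁻¹ Y⁽ⁱ⁾_{•k}`, then the full-data ridge prediction
on the modified targets `Ỹ` reproduces that prediction at row `i`:
`(A Ỹ) i k = Ỹ i k` for all `k`, where `A = K (K + lam I)⁻¹`. -/
theorem loo_fixed_point
    (n C : ℕ) (hn : 1 ≤ n) (hC : 1 ≤ C)
    (K : Matrix (Fin n) (Fin n) ℝ) (hK : K.PosSemidef)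
    (lam : ℝ) (hlam : 0 < lam)
    (Y : Matrix (Fin n) (Fin C) ℝ)
    (A : Matrix (Fin n) (Fin n) ℝ)
    (hA : A = K * (K + lam • (1 : Matrix (Fin n) (Fin n) ℝ))⁻¹)
    (i : Fin n) (hi : A i i ≠ 1)
    (f : Fin C → ℝ)
    (hf : ∀ k : Fin C,
      f k = ∑ a : {j : Fin n // j ≠ i}, ∑ b : {j : Fin n // j ≠ i},
        K i a.val *
          ((K.submatrix (fun a : {j : Fin n // j ≠ i} => a.val)
              (fun b : {j : Fin n // j ≠ i} => b.val)
            + lam • (1 : Matrix {j : Fin n // j ≠ i} {j : Fin n // j ≠ i} ℝ))⁻¹ a b) *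
          Y b.val k)
    (Ytil : Matrix (Fin n) (Fin C) ℝ)
    (hYtil : ∀ (j : Fin n) (k : Fin C), Ytil j k = if j = i then f k else Y j k) :
    ∀ k : Fin C, (A * Ytil) i k = Ytil i k := by
  have hYtil_eq : Ytil = Y.updateRow i (looPrediction K lam i Y) := by
    ext j k
    rw [hYtil, updateRow_apply, hf, looPrediction_apply, looGram]
  rw [hYtil_eq, updateRow_self, hA]
  exact congrFun (loo_fixed_point_general (isUnit_add_smul_one_of_posSemidef hK hlam)
    (isUnit_add_smul_one_of_posSemidef (hK.submatrix _) hlam) Y)
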